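/- Finite embeddability preserves piecewise syndeticity: if X, Y ⊆ ℤ, X is finitely embeddable in Y, and X is piecewise syndetic, then Y is piecewise syndetic. -/

import Mathlib

/-!
Piecewise syndeticity of `A` amounts to a single condition: for some `k`, there are arbitrarily
long intervals of integers `y` for which the window `[y, y + k)` meets `A`
(`piecewiseSyndetic_iff`). Each instance of this condition only involves the finite set
`A ∩ [x, x + n + k)`, and it is invariant under translation, so a shifted copy inside `Y` of that
finite piece of `X` gives the same instance for `Y`, with the same `k`.
-/

/-- A set of integers is thick if it includes arbitrarily long intervals. -/
def Thick (A : Set ℤ) : Prop :=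
  ∀ n : ℕ, ∃ x : ℤ, Set.Ico x (x + n) ⊆ A

/-- A set of integers is syndetic if it has bounded gaps. -/
def Syndetic (A : Set ℤ) : Prop :=
  ∃ k : ℕ, ∀ x : ℤ, (Set.Ico x (x + k) ∩ A).Nonempty

/-- A set of integers is piecewise syndetic if it is the intersection of a
thick set and a syndetic set. -/
def PiecewiseSyndetic (A : Set ℤ) : Prop :=
  ∃ T S : Set ℤ, Thick T ∧ Syndetic S ∧ A = T ∩ S

/-- `X` is finitely embeddable in `Y` if every finite subset of `X` has a
shifted copy inside `Y`. -/
def FinEmbeddable (X Y : Set ℤ) : Prop :=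
  ∀ F : Finset ℤ, ↑F ⊆ X → ∃ t : ℤ, ∀ a ∈ F, t + a ∈ Y

theorem piecewiseSyndetic_iff (A : Set ℤ) :
    PiecewiseSyndetic A ↔
      ∃ k : ℕ, ∀ n : ℕ, ∃ x : ℤ, ∀ y ∈ Set.Ico x (x + n), (Set.Ico y (y + k) ∩ A).Nonempty := by
  constructor
  · rintro ⟨T, S, hT, ⟨k, hk⟩, rfl⟩
    refine ⟨k, fun n => ?_⟩
    obtain ⟨x, hx⟩ := hT (n + k)
    refine ⟨x, fun y hy => ?_⟩
    obtain ⟨z, hz, hzS⟩ := hk y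
    refine ⟨z, hz, hx ?_, hzS⟩
    simp only [Set.mem_Ico] at hy hz ⊢
    push_cast
    omega
  · rintro ⟨k, hk⟩
    -- With `I` the set of starting points of windows that meet `A`, `A ∪ I` is thick and
    -- `A ∪ Iᶜ` is syndetic: a point `x` outside `I` is itself in `A ∪ Iᶜ`.
    set I : Set ℤ := {y | (Set.Ico y (y + k) ∩ A).Nonempty} with hI
    refine ⟨A ∪ I, A ∪ Iᶜ, fun n => ?_, ⟨k + 1, fun x => ?_⟩, ?_⟩
    · obtain ⟨x, hx⟩ := hk n
      exact ⟨x, fun y hy => Or.inr (hx y hy)⟩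
    · by_cases hxI : x ∈ I
      · obtain ⟨z, hz, hzA⟩ := hxI
        refine ⟨z, ?_, Or.inl hzA⟩
        simp only [Set.mem_Ico] at hz ⊢
        push_cast
        omega
      · refine ⟨x, ?_, Or.inr hxI⟩
        simp only [Set.mem_Ico]
        push_cast
        omega
    · rw [← Set.union_inter_distrib_left, Set.inter_compl_self, Set.union_empty]

/-- Finite embeddability preserves piecewise syndeticity. -/
theorem finEmbeddable_piecewiseSyndetic (X Y : Set ℤ)
    (hfe : FinEmbeddable X Y) (hX : PiecewiseSyndetic X) :
    PiecewiseSyndetic Y := by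
  classical
  rw [piecewiseSyndetic_iff] at hX ⊢
  obtain ⟨k, hk⟩ := hX
  refine ⟨k, fun n => ?_⟩
  obtain ⟨x, hx⟩ := hk n
  obtain ⟨t, ht⟩ := hfe ((Finset.Ico x (x + n + k)).filter (· ∈ X))
    (fun a ha => (Finset.mem_filter.mp ha).2)
  refine ⟨t + x, fun y hy => ?_⟩
  simp only [Set.mem_Ico] at hy
  obtain ⟨z, hz, hzX⟩ := hx (y - t) ⟨by omega, by omega⟩
  simp only [Set.mem_Ico] at hz
  refine ⟨t + z, ⟨by omega, by omega⟩, ht z ?_⟩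
  simp only [Finset.mem_filter, Finset.mem_Ico]
  exact ⟨⟨by omega, by omega⟩, hzX⟩
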